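/- Suppose M is a countable structure admitting a finite base. Then sr(M) < ω·3. -/

import Mathlib

open FirstOrder

universe u v w

namespace ScottTools

variable (L : FirstOrder.Language.{u, v}) (M : Type w) (N : Type w) [L.Structure M] [L.Structure N]

/-- Two tuples (of the same length) have the same quantifier-free type. -/
def QFEquiv {n : ℕ} (a : Fin n → M) (b : Fin n → N) : Prop :=
  ∀ φ : L.Formula (Fin n), φ.IsQF → (φ.Realize a ↔ φ.Realize b)

/-- The ordinal-indexed back-and-forth equivalence `(M, ā) ≡_α (N, b̄)`:
`≡₀` is equality of quantifier-free types, `≡_{α+1}` is the back-and-forth condition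
with respect to `≡_α`, and limit stages are intersections. -/
def BFEquiv : Ordinal.{w} → (n : ℕ) → (Fin n → M) → (Fin n → N) → Prop
  | α, n, a, b =>
    QFEquiv L M N a b ∧
    ∀ β : Ordinal.{w}, β < α →
      (∀ x : M, ∃ y : N, BFEquiv β (n + 1) (Fin.snoc a x) (Fin.snoc b y)) ∧
      (∀ y : N, ∃ x : M, BFEquiv β (n + 1) (Fin.snoc a x) (Fin.snoc b y))
  termination_by α => α

/-- `(M, ā) ≡_∞ (N, b̄)`: back-and-forth equivalent for all ordinals. -/
def BFEquivInf (n : ℕ) (a : Fin n → M) (b : Fin n → N) : Prop :=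
  ∀ α : Ordinal.{w}, BFEquiv L M N α n a b

/-- The Scott rank of a structure: the least ordinal `α` such that any two finite tuples
that are `≡_α`-equivalent are `≡_∞`-equivalent. -/
noncomputable def ScottRank : Ordinal.{w} :=
  sInf {α : Ordinal.{w} | ∀ (n : ℕ) (a b : Fin n → M),
    BFEquiv L M M α n a b → BFEquivInf L M M n a b}

/-- `B` is a base for `M`: distinct elements of `M` have distinct complete first-order
types over `B`. -/
def IsBase (B : Set M) : Prop :=
  ∀ a b : M,
    (∀ (k : ℕ) (p : Fin k → M), (∀ i, p i ∈ B) →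
      ∀ φ : L.Formula (Fin (k + 1)),
        (φ.Realize (Fin.snoc p a) ↔ φ.Realize (Fin.snoc p b))) →
    a = b

end ScottTools

open ScottTools

namespace ScottTools

section Aux

variable {L : FirstOrder.Language.{u, v}} {M : Type w} [L.Structure M]

theorem bf_iff {α : Ordinal.{w}} {n : ℕ} {a b : Fin n → M} :
    BFEquiv L M M α n a b ↔ QFEquiv L M M a b ∧
    ∀ β : Ordinal.{w}, β < α →
      (∀ x : M, ∃ y : M, BFEquiv L M M β (n + 1) (Fin.snoc a x) (Fin.snoc b y)) ∧
      (∀ y : M, ∃ x : M, BFEquiv L M M β (n + 1) (Fin.snoc a x) (Fin.snoc b y)) := by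
  rw [BFEquiv]

theorem bf_mono {α β : Ordinal.{w}} (h : β ≤ α) {n : ℕ} {a b : Fin n → M}
    (hab : BFEquiv L M M α n a b) : BFEquiv L M M β n a b := by
  rw [bf_iff] at hab ⊢
  exact ⟨hab.1, fun γ hγ => hab.2 γ (hγ.trans_le h)⟩

theorem bf_symm (α : Ordinal.{w}) : ∀ {n : ℕ} {a b : Fin n → M},
    BFEquiv L M M α n a b → BFEquiv L M M α n b a := by
  induction α using WellFoundedLT.induction with
  | ind α ih =>
    intro n a b hab
    rw [bf_iff] at hab ⊢
    refine ⟨fun φ hφ => (hab.1 φ hφ).symm, fun β hβ => ⟨fun x => ?_, fun x => ?_⟩⟩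
    · obtain ⟨y, hy⟩ := (hab.2 β hβ).2 x
      exact ⟨y, ih β hβ hy⟩
    · obtain ⟨y, hy⟩ := (hab.2 β hβ).1 x
      exact ⟨y, ih β hβ hy⟩

theorem bf_trans (α : Ordinal.{w}) : ∀ {n : ℕ} {a b c : Fin n → M},
    BFEquiv L M M α n a b → BFEquiv L M M α n b c → BFEquiv L M M α n a c := by
  induction α using WellFoundedLT.induction with
  | ind α ih =>
    intro n a b c hab hbc
    rw [bf_iff] at hab hbc ⊢
    refine ⟨fun φ hφ => (hab.1 φ hφ).trans (hbc.1 φ hφ), fun β hβ => ⟨fun x => ?_, fun x => ?_⟩⟩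
    · obtain ⟨y, hy⟩ := (hab.2 β hβ).1 x
      obtain ⟨z, hz⟩ := (hbc.2 β hβ).1 y
      exact ⟨z, ih β hβ hy hz⟩
    · obtain ⟨y, hy⟩ := (hbc.2 β hβ).2 x
      obtain ⟨z, hz⟩ := (hab.2 β hβ).2 y
      exact ⟨z, ih β hβ hz hy⟩

theorem snoc_reindex {n m : ℕ} (a : Fin n → M) (x : M) (σ : Fin m → Fin n) :
    (Fin.snoc (a ∘ σ) x : Fin (m + 1) → M) =
      (Fin.snoc a x : Fin (n + 1) → M) ∘
        (Fin.snoc (fun i => (σ i).castSucc) (Fin.last n) : Fin (m + 1) → Fin (n + 1)) := by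
  funext i
  refine Fin.lastCases ?_ (fun i => ?_) i <;> simp

theorem qf_reindex {n m : ℕ} {a b : Fin n → M} (σ : Fin m → Fin n)
    (h : QFEquiv L M M a b) : QFEquiv L M M (a ∘ σ) (b ∘ σ) := by
  intro φ hφ
  have := h (φ.relabel σ) (FirstOrder.Language.BoundedFormula.IsQF.relabel hφ _)
  simpa [FirstOrder.Language.Formula.realize_relabel] using this

theorem bf_reindex (α : Ordinal.{w}) : ∀ {n m : ℕ} {a b : Fin n → M} (σ : Fin m → Fin n),
    BFEquiv L M M α n a b → BFEquiv L M M α m (a ∘ σ) (b ∘ σ) := by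
  induction α using WellFoundedLT.induction with
  | ind α ih =>
    intro n m a b σ hab
    rw [bf_iff] at hab ⊢
    refine ⟨qf_reindex σ hab.1, fun β hβ => ⟨fun x => ?_, fun x => ?_⟩⟩
    · obtain ⟨y, hy⟩ := (hab.2 β hβ).1 x
      refine ⟨y, ?_⟩
      rw [snoc_reindex, snoc_reindex]
      exact ih β hβ _ hy
    · obtain ⟨y, hy⟩ := (hab.2 β hβ).2 x
      refine ⟨y, ?_⟩
      rw [snoc_reindex, snoc_reindex]
      exact ih β hβ _ hy

theorem append_snoc_aux {n r : ℕ} (a : Fin n → M) (x : Fin r → M) (z : M) :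
    (Fin.append a (Fin.snoc x z : Fin (r + 1) → M)) =
      (Fin.snoc (Fin.append a x) z : Fin (n + r + 1) → M) := by
  exact Fin.append_snoc a x z

theorem bf_extend (r : ℕ) : ∀ (β : Ordinal.{w}) {n : ℕ} {a b : Fin n → M},
    BFEquiv L M M (β + r) n a b → ∀ x : Fin r → M, ∃ y : Fin r → M,
      BFEquiv L M M β (n + r) (Fin.append a x) (Fin.append b y) := by
  induction r with
  | zero =>
    intro β n a b h x
    refine ⟨x, ?_⟩
    have h2 : BFEquiv L M M β n a b := by simpa using h
    have hx : x = Fin.elim0 := Subsingleton.elim _ _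
    subst hx
    rw [Fin.append_elim0, Fin.append_elim0]
    exact bf_reindex β _ h2
  | succ r ih =>
    intro β n a b h x
    have h2 : BFEquiv L M M (β + 1 + r) n a b := by
      have : β + 1 + (r : Ordinal.{w}) = β + ((r + 1 : ℕ) : Ordinal.{w}) := by
        rw [add_assoc]; congr 1; norm_cast; omega
      rwa [this]
    obtain ⟨y, hy⟩ := ih (β + 1) h2 (Fin.init x)
    rw [bf_iff] at hy
    obtain ⟨z, hz⟩ := (hy.2 β (lt_add_one β)).1 (x (Fin.last r))
    refine ⟨Fin.snoc y z, ?_⟩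
    have e : x = Fin.snoc (Fin.init x) (x (Fin.last r)) := (Fin.snoc_init_self x).symm
    rw [e]
    change BFEquiv L M M β (n + r + 1) _ _
    rw [append_snoc_aux, append_snoc_aux]
    exact hz

theorem bf_formula_aux {m l : ℕ} (φ : L.BoundedFormula (Fin m) l) : ∃ k : ℕ,
    ∀ (v v' : Fin m → M) (xs xs' : Fin l → M),
      BFEquiv L M M (k : Ordinal.{w}) (m + l) (Fin.append v xs) (Fin.append v' xs') →
      (φ.Realize v xs ↔ φ.Realize v' xs') := by
  have key : ∀ {l : ℕ} (v : Fin m → M) (xs : Fin l → M),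
      Fin.append v xs ∘ finSumFinEquiv = Sum.elim v xs := by
    intro l v xs
    funext i
    rcases i with i | i <;> simp
  induction φ with
  | falsum => exact ⟨0, fun v v' xs xs' _ => Iff.rfl⟩
  | equal t₁ t₂ =>
    refine ⟨0, fun v v' xs xs' h => ?_⟩
    rw [bf_iff] at h
    have := h.1 ((t₁.relabel finSumFinEquiv).equal (t₂.relabel finSumFinEquiv))
      (FirstOrder.Language.BoundedFormula.IsAtomic.equal _ _).isQF
    simpa [FirstOrder.Language.Formula.realize_equal, key,
      FirstOrder.Language.BoundedFormula.Realize] using this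
  | rel R ts =>
    refine ⟨0, fun v v' xs xs' h => ?_⟩
    rw [bf_iff] at h
    have := h.1 (R.formula (fun i => (ts i).relabel finSumFinEquiv))
      (FirstOrder.Language.BoundedFormula.IsAtomic.rel _ _).isQF
    simpa [FirstOrder.Language.Formula.realize_rel, key,
      FirstOrder.Language.BoundedFormula.Realize] using this
  | imp φ ψ ih₁ ih₂ =>
    obtain ⟨k₁, h₁⟩ := ih₁
    obtain ⟨k₂, h₂⟩ := ih₂
    refine ⟨max k₁ k₂, fun v v' xs xs' h => ?_⟩
    rw [FirstOrder.Language.BoundedFormula.realize_imp,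
      FirstOrder.Language.BoundedFormula.realize_imp,
      h₁ v v' xs xs' (bf_mono (by exact_mod_cast le_max_left _ _) h),
      h₂ v v' xs xs' (bf_mono (by exact_mod_cast le_max_right _ _) h)]
  | all φ ih =>
    obtain ⟨k, hk⟩ := ih
    refine ⟨k + 1, fun v v' xs xs' h => ?_⟩
    rw [bf_iff] at h
    have h2 := h.2 k (by exact_mod_cast Nat.lt_succ_self k)
    rw [FirstOrder.Language.BoundedFormula.realize_all,
      FirstOrder.Language.BoundedFormula.realize_all]
    constructor
    · intro H y
      obtain ⟨x, hx⟩ := h2.2 y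
      refine (hk v v' (Fin.snoc xs x) (Fin.snoc xs' y) ?_).1 (H x)
      change BFEquiv L M M _ (m + _ + 1) _ _
      rw [append_snoc_aux, append_snoc_aux]
      exact hx
    · intro H x
      obtain ⟨y, hy⟩ := h2.1 x
      refine (hk v v' (Fin.snoc xs x) (Fin.snoc xs' y) ?_).2 (H y)
      change BFEquiv L M M _ (m + _ + 1) _ _
      rw [append_snoc_aux, append_snoc_aux]
      exact hy

theorem bf_omega_formula {m : ℕ} {a b : Fin m → M}
    (h : BFEquiv L M M Ordinal.omega0 m a b) (φ : L.Formula (Fin m)) :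
    φ.Realize a ↔ φ.Realize b := by
  obtain ⟨k, hk⟩ := bf_formula_aux (M := M) φ
  refine hk a b default default ?_
  have e : ∀ c : Fin m → M, Fin.append c (default : Fin 0 → M) = c := by
    intro c
    funext i
    exact Fin.append_left c (default : Fin 0 → M) i
  rw [e, e]
  exact bf_mono (Ordinal.natCast_lt_omega0 k).le h

/-- Elements are determined by their `≡_ω`-class over the tuple `e`. -/
def TBase (L : FirstOrder.Language.{u, v}) {M : Type w} [L.Structure M]
    {n : ℕ} (e : Fin n → M) : Prop :=
  ∀ x y : M, BFEquiv L M M Ordinal.omega0 (n + 1) (Fin.snoc e x) (Fin.snoc e y) → x = y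

theorem tbase_of_isBase {n : ℕ} (e : Fin n → M) (B : Set M) (hB : B ⊆ Set.range e)
    (h : IsBase L M B) : TBase L e := by
  intro x y hxy
  refine h x y fun k p hp φ => ?_
  choose g hg using fun i => hB (hp i)
  have hp' : p = e ∘ g := by funext i; exact (hg i).symm
  subst hp'
  rw [snoc_reindex, snoc_reindex]
  exact bf_omega_formula (bf_reindex _ _ hxy) φ

theorem snoc_eq_append {n r : ℕ} (e : Fin n → M) (x : Fin r → M) (i : Fin r) :
    (Fin.snoc e (x i) : Fin (n + 1) → M) = Fin.append e x ∘
      (Fin.snoc (fun j => Fin.castAdd r j) (Fin.natAdd n i) : Fin (n + 1) → Fin (n + r)) := by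
  funext j
  refine Fin.lastCases ?_ (fun j => ?_) j <;> simp

theorem bf_points {n r : ℕ} {e e' : Fin n → M} {x y : Fin r → M} {α : Ordinal.{w}}
    (h : BFEquiv L M M α (n + r) (Fin.append e x) (Fin.append e' y)) (i : Fin r) :
    BFEquiv L M M α (n + 1) (Fin.snoc e (x i)) (Fin.snoc e' (y i)) := by
  rw [snoc_eq_append e x, snoc_eq_append e' y]
  exact bf_reindex α _ h

theorem qf_right {n r : ℕ} {e e' : Fin n → M} {x y : Fin r → M} {α : Ordinal.{w}}
    (h : BFEquiv L M M α (n + r) (Fin.append e x) (Fin.append e' y)) :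
    QFEquiv L M M x y := by
  rw [bf_iff] at h
  have := qf_reindex (Fin.natAdd n) h.1
  have e1 : ∀ (c : Fin n → M) (z : Fin r → M), Fin.append c z ∘ Fin.natAdd n = z := by
    intro c z; funext i; simp
  rwa [e1, e1] at this

theorem tbase_transfer {n : ℕ} {e e' : Fin n → M}
    (h : BFEquiv L M M (Ordinal.omega0 + Ordinal.omega0) n e e') (hb : TBase L e) :
    TBase L e' := by
  intro x y hxy
  have h2 : BFEquiv L M M (Ordinal.omega0 + (2 : ℕ)) n e' e :=
    bf_symm _ (bf_mono (by gcongr; exact (Ordinal.natCast_lt_omega0 2).le) h)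
  obtain ⟨z, hz⟩ := bf_extend 2 _ h2 ![x, y]
  have hx := bf_points hz 0
  have hy := bf_points hz 1
  have hzz : z 0 = z 1 := hb _ _ (bf_trans _ (bf_symm _ hx) (bf_trans _ hxy hy))
  have := qf_right hz ((FirstOrder.Language.Term.var (0 : Fin 2)).equal
    (FirstOrder.Language.Term.var (1 : Fin 2)))
    (FirstOrder.Language.BoundedFormula.IsAtomic.equal _ _).isQF
  simpa [FirstOrder.Language.Formula.realize_equal, hzz] using this

theorem bf_all {m : ℕ} {e e' : Fin m → M}
    (h : BFEquiv L M M (Ordinal.omega0 + Ordinal.omega0) m e e') (hb : TBase L e')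
    (α : Ordinal.{w}) : ∀ {n : ℕ} (x y : Fin n → M),
    (∀ i, BFEquiv L M M Ordinal.omega0 (m + 1) (Fin.snoc e (x i)) (Fin.snoc e' (y i))) →
    BFEquiv L M M α n x y := by
  induction α using WellFoundedLT.induction with
  | ind α ih =>
    intro n x y hxy
    have hext : ∀ r : ℕ, BFEquiv L M M (Ordinal.omega0 + (r : Ordinal.{w})) m e e' := fun r =>
      bf_mono (by gcongr; exact (Ordinal.natCast_lt_omega0 r).le) h
    rw [bf_iff]
    refine ⟨?_, fun β hβ => ⟨fun z => ?_, fun z => ?_⟩⟩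
    · obtain ⟨y', hy'⟩ := bf_extend n _ (hext n) x
      have : y' = y := by
        funext i
        exact hb _ _ (bf_trans _ (bf_symm _ (bf_points hy' i)) (hxy i))
      subst this
      exact qf_right hy'
    · obtain ⟨z', hz'⟩ := bf_extend 1 _ (hext 1) ![z]
      refine ⟨z' 0, ih β hβ _ _ fun i => ?_⟩
      refine Fin.lastCases ?_ (fun i => ?_) i
      · simpa using bf_points hz' 0
      · simpa using hxy i
    · obtain ⟨z', hz'⟩ := bf_extend 1 _ (bf_symm _ (hext 1)) ![z]
      refine ⟨z' 0, ih β hβ _ _ fun i => ?_⟩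
      refine Fin.lastCases ?_ (fun i => ?_) i
      · simpa using bf_symm _ (bf_points hz' 0)
      · simpa using hxy i

end Aux

end ScottTools

open ScottTools

/-- A countable structure admitting a finite base has Scott rank `< ω·3`. -/
theorem scottRank_lt_of_finite_base {L : FirstOrder.Language.{u, v}} {M : Type w}
    [L.Structure M] [Countable M] (B : Set M) (hfin : B.Finite) (hbase : IsBase L M B) :
    ScottRank L M < Ordinal.omega0 * 3 := by
  obtain ⟨k, b, hb⟩ : ∃ (k : ℕ) (b : Fin k → M), Set.range b = B := by
    obtain ⟨k, b, hb⟩ := hfin.fin_param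
    exact ⟨k, b, hb.2⟩
  have hle : ScottRank L M ≤ Ordinal.omega0 + Ordinal.omega0 + (k : Ordinal.{w}) := by
    refine csInf_le' ?_
    intro n a c hac
    obtain ⟨d, hd⟩ := bf_extend k _ hac b
    have hbase1 : TBase L (Fin.append a b) := by
      refine tbase_of_isBase _ B ?_ hbase
      rw [← hb]
      rintro _ ⟨i, rfl⟩
      exact ⟨Fin.natAdd n i, by simp⟩
    intro α
    refine bf_all hd (tbase_transfer hd hbase1) α a c fun i => ?_
    have e1 : ∀ (p : Fin n → M) (q : Fin k → M),
        (Fin.snoc (Fin.append p q) (p i) : Fin (n + k + 1) → M) = Fin.append p q ∘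
          (Fin.snoc (fun j => j) (Fin.castAdd k i) : Fin (n + k + 1) → Fin (n + k)) := by
      intro p q
      funext j
      refine Fin.lastCases ?_ (fun j => ?_) j <;> simp
    rw [e1, e1]
    exact bf_mono le_self_add (bf_reindex _ _ hd)
  refine hle.trans_lt ?_
  have h3 : Ordinal.omega0 * 3 = Ordinal.omega0 + Ordinal.omega0 + Ordinal.omega0.{w} := by
    rw [show (3 : Ordinal.{w}) = 1 + 1 + 1 by norm_num, mul_add, mul_add, mul_one]
  rw [h3]
  gcongr
  exact Ordinal.natCast_lt_omega0 k
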